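/- arXiv:2205.00734 — 2 statements merged into one kernel-verified Lean document; each statement's English description precedes it below -/
import Mathlib

section
/- Let A = {0,…,k−1} with k ≥ 2 and, for each n ≥ 1, let w_n be the concatenation in lexicographic order of all k^n words of length n over A. For all n ≥ 3 and all symbols a, b, c ∈ A with a ≠ b and b ≠ c, the word abc has exactly n·k^{n−3} (possibly overlapping) occurrences in w_n. -/
/-!
Write a position of `w_n` as `p = i * n + j` with `j < n`: it carries the digit of `k`-weight
`k ^ (n - 1 - j)` of `i`. For each offset `j` exactly `k ^ (n - 3)` values of `i` start an
occurrence of `abc`: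

* for `j ≤ n - 3` the occurrence lies inside one block and prescribes three consecutive digits
  of `i` (`card_window`);
* for `j = n - 2` it says that `i` ends in `ab` and that `i + 1` has leading digit `c`. Since
  `a ≠ b`, adding one to `i` carries at most into the digit of weight `k`, so the leading digit
  of `i` is already `c`, and both ends of `i` are prescribed (`card_ends`);
* for `j = n - 1` it says that `i + 1` starts with `bc` and that `i` ends in `a`, i.e. both ends
  of `i + 1` are prescribed. As `b ≠ c`, neither `i + 1 = 0` nor `i + 1 = k ^ n` starts with `bc`,
  so `i + 1` may be taken to range over `[0, k ^ n)`.

The conditions `b ≠ c` and `a ≠ b` also make the digit formula harmless at the two last positions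
of `w_n`, where fewer than three letters remain. Summing over `j` gives `n * k ^ (n - 3)`.
-/

/-- The word of index `i` (for `0 ≤ i < k^n`) in the lexicographic enumeration of
all words of length `n` over `{0, …, k-1}`: the base-`k` expansion of `i`, most
significant digit first, padded with zeros to length `n`. -/
def lexWord (k : ℕ) (hk : 0 < k) (n i : ℕ) : List (Fin k) :=
  List.ofFn fun j : Fin n => (⟨i / k ^ (n - 1 - (j : ℕ)) % k, Nat.mod_lt _ hk⟩ : Fin k)

/-- `wn k hk n` is the concatenation, in lexicographic order, of all `k^n` words
of length `n` over the alphabet `{0, …, k-1}`. -/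
def wn (k : ℕ) (hk : 0 < k) (n : ℕ) : List (Fin k) :=
  ((List.range (k ^ n)).map (lexWord k hk n)).flatten

/-- The number of (possibly overlapping) occurrences of `u` in `w`. -/
def occurrences {A : Type*} [DecidableEq A] (w u : List A) : ℕ :=
  ((Finset.range (w.length + 1 - u.length)).filter fun i =>
    (w.drop i).take u.length = u).card

/-! ### Counting integers with prescribed digits -/

/-- Among the integers below `F * (M * E)`, the middle "digit" `i / E % M` takes each value
equally often. -/
lemma card_window (F M E r : ℕ) (hr : r < M) :
    ((Finset.range (F * (M * E))).filter fun i => i / E % M = r).card = F * E := by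
  rcases Nat.eq_zero_or_pos E with rfl | hE
  · simp
  have hM : 0 < M := by omega
  have : F * E = (Finset.range F ×ˢ Finset.range E).card := by simp
  rw [this]
  refine Finset.card_nbij' (fun i => (i / E / M, i % E)) (fun x => (x.1 * M + r) * E + x.2)
    ?_ ?_ ?_ ?_
  · intro i hi
    simp only [Finset.coe_filter, Finset.mem_range, Set.mem_ofPred_eq] at hi
    simp only [Finset.coe_product, Finset.coe_range, Set.mem_prod, Set.mem_Iio]
    refine ⟨?_, Nat.mod_lt _ hE⟩
    rw [Nat.div_div_eq_div_mul, Nat.div_lt_iff_lt_mul (by positivity), mul_comm E M]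
    exact hi.1
  · rintro ⟨f, e⟩ hx
    simp only [Finset.coe_product, Finset.coe_range, Set.mem_prod, Set.mem_Iio] at hx
    simp only [Finset.coe_filter, Finset.mem_range, Set.mem_ofPred_eq]
    have h1 : ((f * M + r) * E + e) / E = f * M + r := by
      rw [mul_comm, Nat.mul_add_div hE, Nat.div_eq_of_lt hx.2, add_zero]
    constructor
    · have : f * M + r < F * M := by nlinarith
      rw [← mul_assoc]
      nlinarith
    · rw [h1, mul_comm, Nat.mul_add_mod, Nat.mod_eq_of_lt hr]
  · intro i hi
    simp only [Finset.coe_filter, Finset.mem_range, Set.mem_ofPred_eq] at hi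
    simp only
    rw [← hi.2, Nat.div_add_mod', Nat.div_add_mod']
  · rintro ⟨f, e⟩ hx
    simp only [Finset.coe_product, Finset.coe_range, Set.mem_prod, Set.mem_Iio] at hx
    have h1 : ((f * M + r) * E + e) / E = f * M + r := by
      rw [mul_comm, Nat.mul_add_div hE, Nat.div_eq_of_lt hx.2, add_zero]
    simp only
    rw [h1, mul_comm (f * M + r) E, Nat.mul_add_mod, Nat.mod_eq_of_lt hx.2, mul_comm f M,
      Nat.mul_add_div hM, Nat.div_eq_of_lt hr, add_zero]

/-- Prescribing the low part `s` and the high part `t` leaves the `Q` choices of the middle. -/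
lemma card_ends (T Q S s t : ℕ) (hs : s < S) (ht : t < T) :
    ((Finset.range (T * (Q * S))).filter fun i => i % S = s ∧ i / (Q * S) = t).card = Q := by
  rcases Nat.eq_zero_or_pos Q with rfl | hQ
  · simp
  have hS : 0 < S := by omega
  have h1 : ∀ q, (t * (Q * S) + q * S + s) / S = Q * t + q := by
    intro q
    have : t * (Q * S) + q * S + s = S * (Q * t + q) + s := by ring
    rw [this, Nat.mul_add_div hS, Nat.div_eq_of_lt hs, add_zero]
  conv_rhs => rw [← Finset.card_range Q]
  refine Finset.card_nbij' (fun i => i / S % Q) (fun q => t * (Q * S) + q * S + s) ?_ ?_ ?_ ?_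
  · intro i hi
    simpa using Nat.mod_lt _ hQ
  · intro q hq
    simp only [Finset.coe_range, Set.mem_Iio] at hq
    simp only [Finset.coe_filter, Finset.mem_range, Set.mem_ofPred_eq]
    refine ⟨?_, ?_, ?_⟩
    · have : q * S + s < Q * S := by nlinarith
      nlinarith [Nat.mul_le_mul_right (Q * S) (Nat.succ_le_of_lt ht)]
    · have : t * (Q * S) + q * S + s = S * (Q * t + q) + s := by ring
      rw [this, Nat.mul_add_mod, Nat.mod_eq_of_lt hs]
    · rw [mul_comm Q S, ← Nat.div_div_eq_div_mul, mul_comm S Q, h1, Nat.mul_add_div hQ,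
        Nat.div_eq_of_lt hq, add_zero]
  · intro i hi
    simp only [Finset.coe_filter, Finset.mem_range, Set.mem_ofPred_eq] at hi
    obtain ⟨-, h2, h3⟩ := hi
    simp only
    rw [mul_comm Q S, ← Nat.div_div_eq_div_mul] at h3
    have e1 := Nat.div_add_mod (i / S) Q
    have e2 := Nat.div_add_mod i S
    rw [h3] at e1
    rw [h2, ← e1] at e2
    linarith [e2, (by ring : S * (Q * t + i / S % Q) = t * (Q * S) + i / S % Q * S)]
  · intro q hq
    simp only [Finset.coe_range, Set.mem_Iio] at hq
    simp only
    rw [h1, Nat.mul_add_mod, Nat.mod_eq_of_lt hq]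

lemma two_digits (k x b c : ℕ) (hb : b < k) (hc : c < k) :
    (x / k % k = b ∧ x % k = c) ↔ x % (k * k) = b * k + c := by
  have hk : 0 < k := by omega
  rw [Nat.mod_mul]
  constructor
  · rintro ⟨rfl, rfl⟩; ring
  · intro h
    have h1 : x % k = c := by
      have := congrArg (· % k) h
      simpa [Nat.add_mul_mod_self_left, Nat.mul_add_mod', Nat.mod_eq_of_lt hc] using this
    refine ⟨?_, h1⟩
    rw [h1] at h
    have : k * (x / k % k) = k * b := by linarith
    exact Nat.eq_of_mul_eq_mul_left hk this

lemma three_digits (k x a b c : ℕ) (ha : a < k) (hb : b < k) (hc : c < k) :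
    (x / (k * k) % k = a ∧ x / k % k = b ∧ x % k = c) ↔
      x % (k * k * k) = (a * k + b) * k + c := by
  have hk : 0 < k := by omega
  rw [two_digits k x b c hb hc, Nat.mod_mul (a := k * k)]
  have hbc : b * k + c < k * k := by nlinarith
  constructor
  · rintro ⟨rfl, h⟩; rw [h]; ring
  · intro h
    have h1 : x % (k * k) = b * k + c := by
      have := congrArg (· % (k * k)) h
      have e : (a * k + b) * k + c = k * k * a + (b * k + c) := by ring
      simpa [e, Nat.mul_add_mod, Nat.mod_eq_of_lt hbc] using this
    refine ⟨?_, h1⟩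
    rw [h1] at h
    have : k * k * (x / (k * k) % k) = k * k * a := by linarith
    exact Nat.eq_of_mul_eq_mul_left (by positivity) this

/-! ### Letters of `w_n` -/

lemma length_flatten_range {A : Type*} (f : ℕ → List A) (n : ℕ) (hf : ∀ i, (f i).length = n)
    (m : ℕ) : ((List.range m).map f).flatten.length = m * n := by
  induction m with
  | zero => simp
  | succ m ih =>
    rw [List.range_succ, List.map_append, List.flatten_append, List.length_append, ih]
    simp [hf]; ring

lemma getElem?_flatten_range {A : Type*} (f : ℕ → List A) (n : ℕ) (hf : ∀ i, (f i).length = n)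
    (m p : ℕ) (hp : p < m * n) :
    ((List.range m).map f).flatten[p]? = (f (p / n))[p % n]? := by
  induction m with
  | zero => simp at hp
  | succ m ih =>
    rw [List.range_succ, List.map_append, List.flatten_append, List.getElem?_append,
      length_flatten_range f n hf]
    split_ifs with h
    · exact ih h
    · have hd : p / n = m := Nat.div_eq_of_lt_le (by omega) hp
      have hm : p % n = p - m * n := by
        have := Nat.div_add_mod p n
        rw [hd, mul_comm] at this
        omega
      simp [hd, hm]

lemma take_drop_eq_iff {A : Type*} (w : List A) (p : ℕ) (a b c : A) :
    (w.drop p).take 3 = [a, b, c] ↔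
      w[p]? = some a ∧ w[p + 1]? = some b ∧ w[p + 2]? = some c := by
  have h0 : w[p]? = (w.drop p)[0]? := by simp
  have h1 : w[p + 1]? = (w.drop p)[1]? := by simp
  have h2 : w[p + 2]? = (w.drop p)[2]? := by simp
  rw [h0, h1, h2]
  rcases w.drop p with _ | ⟨x, _ | ⟨y, _ | ⟨z, l⟩⟩⟩ <;> simp

/-- The value of the letter of `w_n` at (zero-based) position `p`; the formula is used for all `p`,
also beyond the end of `w_n`. -/
def letterVal (k n p : ℕ) : ℕ := p / n / k ^ (n - 1 - p % n) % k

lemma letterVal_mul_add (k n i j : ℕ) (hj : j < n) :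
    letterVal k n (i * n + j) = i / k ^ (n - 1 - j) % k := by
  unfold letterVal
  rw [mul_comm, Nat.mul_add_div (by omega), Nat.mul_add_mod, Nat.div_eq_of_lt hj,
    Nat.mod_eq_of_lt hj, add_zero]

lemma length_wn (k : ℕ) (hk : 0 < k) (n : ℕ) : (wn k hk n).length = k ^ n * n :=
  length_flatten_range _ n (by simp [lexWord]) _

lemma wn_getElem?_iff (k : ℕ) (hk : 0 < k) (n p : ℕ) (hp : p < k ^ n * n) (a : Fin k) :
    (wn k hk n)[p]? = some a ↔ letterVal k n p = a := by
  have hn : 0 < n := by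
    rcases Nat.eq_zero_or_pos n with rfl | h
    · simp at hp
    · exact h
  unfold wn
  rw [getElem?_flatten_range _ n (by simp [lexWord]) _ _ hp]
  simp [lexWord, Nat.mod_lt _ hn, letterVal, Fin.ext_iff]

/-! ### Counting by offset inside a block -/

lemma card_filter_range_mul (m n : ℕ) (P : ℕ → Prop) [DecidablePred P] :
    ((Finset.range (m * n)).filter P).card =
      ∑ j ∈ Finset.range n, ((Finset.range m).filter fun i => P (i * n + j)).card := by
  simp only [Finset.card_filter]
  rw [Finset.sum_comm]
  induction m with
  | zero => simp
  | succ m ih => rw [Finset.sum_range_succ, ← ih, Nat.succ_mul, Finset.sum_range_add]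

/-- The letters at positions `p`, `p + 1`, `p + 2` are `a`, `b`, `c`. -/
def Hit (k n a b c p : ℕ) : Prop :=
  letterVal k n p = a ∧ letterVal k n (p + 1) = b ∧ letterVal k n (p + 2) = c

instance (k n a b c : ℕ) : DecidablePred (Hit k n a b c) := fun _ => by
  unfold Hit; infer_instance

/-- Occurrences inside one block. -/
lemma card_hit_inner (k N a b c j : ℕ) (ha : a < k) (hb : b < k) (hc : c < k) (hj : j ≤ N) :
    ((Finset.range (k ^ (N + 3))).filter fun i => Hit k (N + 3) a b c (i * (N + 3) + j)).card
      = k ^ N := by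
  have hk : 0 < k := by omega
  obtain ⟨e, rfl⟩ := Nat.exists_eq_add_of_le hj
  have hr : (a * k + b) * k + c < k * k * k := by
    have : a * k + b < k * k := by nlinarith
    nlinarith
  have key := card_window (k ^ j) (k * k * k) (k ^ e) _ hr
  rw [← pow_add, show k ^ j * (k * k * k * k ^ e) = k ^ (j + e + 3) by ring] at key
  rw [← key]
  congr 1
  apply Finset.filter_congr
  intro i _
  unfold Hit
  rw [add_assoc (i * _) j 1, add_assoc (i * _) j 2, letterVal_mul_add _ _ _ _ (by omega),
    letterVal_mul_add _ _ _ _ (by omega), letterVal_mul_add _ _ _ _ (by omega),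
    ← three_digits k _ a b c ha hb hc, Nat.div_div_eq_div_mul, Nat.div_div_eq_div_mul,
    show j + e + 3 - 1 - j = e + 2 by omega, show j + e + 3 - 1 - (j + 1) = e + 1 by omega,
    show j + e + 3 - 1 - (j + 2) = e by omega, pow_succ, pow_succ, mul_assoc]

/-- Occurrences with two letters in one block and the third in the next. -/
lemma card_hit_two_one (k N a b c : ℕ) (ha : a < k) (hb : b < k) (hc : c < k) (hab : a ≠ b) :
    ((Finset.range (k ^ (N + 3))).filter fun i =>
      Hit k (N + 3) a b c (i * (N + 3) + (N + 1))).card = k ^ N := by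
  have hk : 0 < k := by omega
  have hr : a * k + b < k * k := by nlinarith
  have key := card_ends k (k ^ N) (k * k) _ c hr hc
  rw [show k * (k ^ N * (k * k)) = k ^ (N + 3) by ring] at key
  conv_rhs => rw [← key]
  congr 1
  apply Finset.filter_congr
  intro i hi
  rw [Finset.mem_range] at hi
  unfold Hit
  rw [show i * (N + 3) + (N + 1) + 2 = (i + 1) * (N + 3) + 0 by ring, add_assoc,
    letterVal_mul_add _ _ _ _ (by omega),
    letterVal_mul_add _ _ _ _ (by omega), letterVal_mul_add _ _ _ _ (by omega),
    show N + 3 - 1 - (N + 1) = 1 by omega, show N + 3 - 1 - (N + 1 + 1) = 0 by omega,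
    show N + 3 - 1 - 0 = N + 2 by omega, pow_one, pow_zero, Nat.div_one, ← and_assoc,
    two_digits k i a b ha hb, show k ^ N * (k * k) = k ^ (N + 2) by ring]
  refine and_congr_right fun h => ?_
  -- `a ≠ b` rules out the ending `(k-1)(k-1)`, the only one whose carry leaves the last two digits.
  have hr' : a * k + b + 1 < k * k := by
    rcases Nat.lt_or_ge (a + 1) k with h1 | h1
    · nlinarith
    · have : b + 1 < k := by omega
      nlinarith
  have hq : (i + 1) / k ^ (N + 2) = i / k ^ (N + 2) := by
    have e := Nat.div_add_mod i (k * k)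
    rw [h] at e
    rw [show k ^ (N + 2) = (k * k) * k ^ N by ring, ← Nat.div_div_eq_div_mul _ (k * k),
      ← Nat.div_div_eq_div_mul _ (k * k)]
    congr 1
    conv_lhs => rw [← e, add_assoc, Nat.mul_add_div (by positivity), Nat.div_eq_of_lt hr', add_zero]
  have hlt : i / k ^ (N + 2) < k := by
    rw [Nat.div_lt_iff_lt_mul (by positivity)]
    calc i < _ := hi
      _ = _ := by ring
  rw [hq, Nat.mod_eq_of_lt hlt]

/-- Occurrences with one letter in one block and two in the next. -/
lemma card_hit_one_two (k N a b c : ℕ) (ha : a < k) (hb : b < k) (hc : c < k) (hbc : b ≠ c) :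
    ((Finset.range (k ^ (N + 3))).filter fun i =>
      Hit k (N + 3) a b c (i * (N + 3) + (N + 2))).card = k ^ N := by
  have hk : 0 < k := by omega
  have hr : b * k + c < k * k := by nlinarith
  have hpos : b * k + c ≠ 0 := by
    intro h
    have h1 : b * k = 0 := by omega
    have : b = 0 := by
      rcases Nat.mul_eq_zero.1 h1 with h | h <;> omega
    omega
  have key := card_ends (k * k) (k ^ N) k ((a + 1) % k) _ (Nat.mod_lt _ hk) hr
  rw [show k * k * (k ^ N * k) = k ^ (N + 3) by ring, show k ^ N * k = k ^ (N + 1) by ring] at key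
  conv_rhs => rw [← key]
  have hiff : ∀ i, Hit k (N + 3) a b c (i * (N + 3) + (N + 2)) ↔
      i % k = a ∧ (i + 1) / k ^ (N + 1) % (k * k) = b * k + c := by
    intro i
    unfold Hit
    rw [show i * (N + 3) + (N + 2) + 2 = (i + 1) * (N + 3) + 1 by ring,
      show i * (N + 3) + (N + 2) + 1 = (i + 1) * (N + 3) + 0 by ring,
      letterVal_mul_add _ _ _ _ (by omega),
      letterVal_mul_add _ _ _ _ (by omega), letterVal_mul_add _ _ _ _ (by omega),
      show N + 3 - 1 - (N + 2) = 0 by omega, show N + 3 - 1 - 1 = N + 1 by omega,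
      show N + 3 - 1 - 0 = N + 1 + 1 by omega, pow_zero, Nat.div_one,
      ← two_digits k _ b c hb hc, Nat.div_div_eq_div_mul, ← pow_succ]
  have hmod : ∀ i, i % k = a ↔ (i + 1) % k = (a + 1) % k := by
    intro i
    constructor
    · rintro rfl; simp
    · intro h
      have h' : i ≡ a [MOD k] := Nat.ModEq.add_right_cancel' 1 h
      exact (Nat.mod_eq_of_lt ha ▸ h' : i % k = a)
  have hdiv : ∀ m, m < k ^ (N + 3) → m / k ^ (N + 1) < k * k := by
    intro m hm
    rw [Nat.div_lt_iff_lt_mul (by positivity)]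
    calc m < _ := hm
      _ = _ := by ring
  refine Finset.card_nbij' (fun i => i + 1) (fun m => m - 1) ?_ ?_ ?_ ?_
  · intro i hi
    simp only [Finset.coe_filter, Finset.mem_range, Set.mem_ofPred_eq] at hi ⊢
    rw [hiff] at hi
    obtain ⟨h1, h2, h3⟩ := hi
    have hlt : i + 1 < k ^ (N + 3) := by
      refine lt_of_le_of_ne h1 fun h => hpos ?_
      rw [← h3, h, show k ^ (N + 3) = k ^ (N + 1) * (k * k) by ring,
        Nat.mul_div_cancel_left _ (by positivity), Nat.mod_self]
    rw [Nat.mod_eq_of_lt (hdiv _ hlt)] at h3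
    exact ⟨hlt, (hmod i).1 h2, h3⟩
  · intro m hm
    simp only [Finset.coe_filter, Finset.mem_range, Set.mem_ofPred_eq] at hm ⊢
    obtain ⟨h1, h2, h3⟩ := hm
    rcases m with _ | m
    · exact absurd (by simpa using h3.symm) hpos
    · rw [hiff, hmod, Nat.add_sub_cancel, Nat.mod_eq_of_lt (hdiv _ h1)]
      exact ⟨by omega, h2, h3⟩
  · intro i _
    simp
  · intro m hm
    simp only [Finset.coe_filter, Finset.mem_range, Set.mem_ofPred_eq] at hm
    obtain ⟨h1, h2, h3⟩ := hm
    rcases m with _ | m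
    · exact absurd (by simpa using h3.symm) hpos
    · simp

/-- A hit starting inside `w_n` does not run over its end. -/
lemma Hit.add_two_lt (k N a b c p : ℕ) (hk : 0 < k) (hab : a ≠ b) (hbc : b ≠ c)
    (hp : p < k ^ (N + 3) * (N + 3)) (h : Hit k (N + 3) a b c p) :
    p + 2 < k ^ (N + 3) * (N + 3) := by
  by_contra hcon
  obtain ⟨h1, h2, h3⟩ := h
  obtain ⟨m, hm⟩ : ∃ m, k ^ (N + 3) = m + 1 :=
    Nat.exists_eq_succ_of_ne_zero (by positivity)
  have hexp : (m + 1) * (N + 3) = m * (N + 3) + (N + 3) := by ring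
  rw [hm] at hp hcon
  -- Position `(m + 1) * (N + 3)` is the first one past the end.
  have hp' : p = m * (N + 3) + (N + 1) ∨ p = m * (N + 3) + (N + 2) := by omega
  have hdig : ∀ e, e < N + 3 → m / k ^ e % k = k - 1 := by
    intro e he
    obtain ⟨d, hd⟩ := Nat.exists_eq_add_of_lt he
    have hkd : 0 < k ^ d := by positivity
    have hke : 0 < k ^ e := by positivity
    obtain ⟨u, hu⟩ : ∃ u, k ^ e = u + 1 := Nat.exists_eq_succ_of_ne_zero hke.ne'
    obtain ⟨v, hv⟩ : ∃ v, k ^ d = v + 1 := Nat.exists_eq_succ_of_ne_zero hkd.ne'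
    obtain ⟨l, rfl⟩ : ∃ l, k = l + 1 := Nat.exists_eq_succ_of_ne_zero hk.ne'
    have hmm : m = (l + 1) ^ e * ((l + 1) * v + l) + u := by
      have : m + 1 = (u + 1) * ((v + 1) * (l + 1)) := by
        rw [← hm, hd, pow_succ, pow_add, hu, hv]; ring
      rw [hu]
      nlinarith
    rw [hmm, Nat.mul_add_div hke, Nat.div_eq_of_lt (by omega : u < (l + 1) ^ e), add_zero,
      Nat.mul_add_mod, Nat.mod_eq_of_lt (by omega)]
    omega
  rcases hp' with rfl | rfl
  · rw [letterVal_mul_add _ _ _ _ (by omega)] at h1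
    rw [add_assoc, letterVal_mul_add _ _ _ _ (by omega)] at h2
    rw [hdig _ (by omega)] at h1 h2
    omega
  · rw [show m * (N + 3) + (N + 2) + 1 = (m + 1) * (N + 3) + 0 by ring,
      letterVal_mul_add _ _ _ _ (by omega), ← hm] at h2
    rw [show m * (N + 3) + (N + 2) + 2 = (m + 1) * (N + 3) + 1 by ring,
      letterVal_mul_add _ _ _ _ (by omega), ← hm] at h3
    rw [show N + 3 - 1 - 0 = N + 2 by omega, show k ^ (N + 3) = k ^ (N + 2) * k by ring,
      Nat.mul_div_cancel_left _ (by positivity), Nat.mod_self] at h2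
    rw [show N + 3 - 1 - 1 = N + 1 by omega, show k ^ (N + 3) = k ^ (N + 1) * (k * k) by ring,
      Nat.mul_div_cancel_left _ (by positivity), Nat.mul_mod_left] at h3
    omega

/-- For `n ≥ 3` and symbols `a ≠ b`, `b ≠ c`, the word `abc` has exactly
`n·k^(n-3)` occurrences in `w_n`. -/
theorem occurrences_abc_wn (k n : ℕ) (hk : 2 ≤ k) (hn : 3 ≤ n)
    (a b c : Fin k) (hab : a ≠ b) (hbc : b ≠ c) :
    occurrences (wn k (by omega) n) [a, b, c] = n * k ^ (n - 3) := by
  have hk0 : 0 < k := by omega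
  obtain ⟨N, rfl⟩ : ∃ N, n = N + 3 := ⟨n - 3, by omega⟩
  have hab' : (a : ℕ) ≠ b := fun h => hab (Fin.ext h)
  have hbc' : (b : ℕ) ≠ c := fun h => hbc (Fin.ext h)
  have hset : occurrences (wn k hk0 (N + 3)) [a, b, c] =
      ((Finset.range (k ^ (N + 3) * (N + 3))).filter (Hit k (N + 3) a b c)).card := by
    unfold occurrences
    congr 1
    ext p
    simp only [Finset.mem_filter, Finset.mem_range, length_wn, List.length_cons, List.length_nil,
      zero_add, Nat.reduceAdd, take_drop_eq_iff]
    constructor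
    · rintro ⟨hp, h⟩
      rw [wn_getElem?_iff _ _ _ _ (by omega), wn_getElem?_iff _ _ _ _ (by omega),
        wn_getElem?_iff _ _ _ _ (by omega)] at h
      exact ⟨by omega, h⟩
    · rintro ⟨hp, h⟩
      have hp2 := Hit.add_two_lt k N a b c p hk0 hab' hbc' hp h
      rw [wn_getElem?_iff _ _ _ _ (by omega), wn_getElem?_iff _ _ _ _ (by omega),
        wn_getElem?_iff _ _ _ _ (by omega)]
      exact ⟨by omega, h⟩
  rw [hset, card_filter_range_mul, Nat.add_sub_cancel]
  have hall : ∀ j ∈ Finset.range (N + 3), ((Finset.range (k ^ (N + 3))).filter fun i =>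
      Hit k (N + 3) a b c (i * (N + 3) + j)).card = k ^ N := by
    intro j hj
    rw [Finset.mem_range] at hj
    rcases Nat.lt_or_ge N j with h | h
    · obtain rfl | rfl : j = N + 1 ∨ j = N + 2 := by omega
      · exact card_hit_two_one k N a b c a.2 b.2 c.2 hab'
      · exact card_hit_one_two k N a b c a.2 b.2 c.2 hbc'
    · exact card_hit_inner k N a b c j a.2 b.2 c.2 h
  rw [Finset.sum_congr rfl hall]
  simp
end

section
/- Let A = {0,…,k−1} with k ≥ 2 and let w be a finite word over A whose irreducible normal form under → is the empty word. Then the number of output symbols written by the pushdown transducer 𝒯_k while reading w from the initial configuration (state 0, empty stack) is at most |w| − h/6, where h is the number of blocks of length 1 in w. Here the run of 𝒯_k is modeled by iterating over the symbols of w the transition function on triples (state b ∈ {0,1}, stack s, output count c), starting from (0, [], 0): from (0, s, c) reading a, go to (1, tail s, c) if the head of s equals a, and to (0, a :: s, c+1) otherwise; from (1, s, c) reading a, go to (0, tail s, c+1) if the head of s equals a, and to (0, a :: s, c+2) otherwise. The output count after reading all of w is the number of output symbols written. -/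
/-!
Write `h` for the number of blocks of length 1, `s` for the stack and `c` for the output count.
In a maximal run of pops, the first pop reads the same symbol as the push just before it, so
neither of these two positions is a block of length 1. If `D` is the number of pops which are not
the first of their run, a prefix `p` therefore satisfies `h ≤ |s| + 2 * D`. A run of `r` pops
contributes `r - 1 ≤ 2 * ⌊r / 2⌋` to `D`, and `|p| - c` is essentially the sum of the `⌊r / 2⌋`.
As the stack is empty after reading `w`, this yields `h ≤ 4 * (|w| - c)`, which is stronger than
the claim.

The estimate is carried along the run by the invariant `CountInv` (`countInv_foldl`). The final
stack is empty because reachable stacks never have two equal consecutive symbols, so reading a symbol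
twice restores the stack and the stack obtained by reading a word is
unchanged under the rewriting relation (`foldl_stackStep_of_step`).
-/

/-- One rewriting step: `w → w'` iff `w'` is obtained from `w` by deleting two
consecutive identical symbols. -/
def Step {A : Type*} (w w' : List A) : Prop :=
  ∃ (u v : List A) (a : A), w = u ++ [a, a] ++ v ∧ w' = u ++ v

/-- The number of blocks of length 1 of a word `w`: the number of positions
(0-indexed) whose symbol differs from each of its existing neighbours. -/
def singletonBlocks {A : Type*} [DecidableEq A] (w : List A) : ℕ :=
  ((Finset.range w.length).filter fun i =>
    (i = 0 ∨ w[i - 1]? ≠ w[i]?) ∧ (i + 1 = w.length ∨ w[i]? ≠ w[i + 1]?)).card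

/-- One step of the transducer `𝒯_k`, keeping track of the state (`false`/`true`
for states 0/1), the stack (top symbol at the head) and the number of output
symbols written so far. -/
def countStep {A : Type*} [DecidableEq A] :
    Bool × List A × ℕ → A → Bool × List A × ℕ
  | (false, s, c), a =>
      if s.head? = some a then (true, s.tail, c) else (false, a :: s, c + 1)
  | (true, s, c), a =>
      if s.head? = some a then (false, s.tail, c + 1) else (false, a :: s, c + 2)

/-- The number of output symbols written by `𝒯_k` while reading `w` from the
initial configuration (state 0, empty stack). -/
def outputCount {A : Type*} [DecidableEq A] (w : List A) : ℕ :=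
  (w.foldl countStep (false, [], 0)).2.2

/-- The action of the transducer on the stack alone. -/
def stackStep {A : Type*} [DecidableEq A] (s : List A) (a : A) : List A :=
  if s.head? = some a then s.tail else a :: s

theorem countStep_stack {A : Type*} [DecidableEq A] (x : Bool × List A × ℕ) (a : A) :
    (countStep x a).2.1 = stackStep x.2.1 a := by
  obtain ⟨b, s, c⟩ := x
  cases b <;> simp only [countStep, stackStep] <;> split_ifs <;> rfl

theorem foldl_countStep_stack {A : Type*} [DecidableEq A] (w : List A)
    (x : Bool × List A × ℕ) :
    (w.foldl countStep x).2.1 = w.foldl stackStep x.2.1 := by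
  induction w generalizing x with
  | nil => rfl
  | cons a w ih => simp only [List.foldl_cons, ih, countStep_stack]

theorem stackStep_isChain {A : Type*} [DecidableEq A] {s : List A}
    (hs : s.IsChain (· ≠ ·)) (a : A) : (stackStep s a).IsChain (· ≠ ·) := by
  unfold stackStep
  split_ifs with h
  · exact hs.tail
  · cases s with
    | nil => simp
    | cons b t =>
      simp only [List.head?_cons, Option.some.injEq] at h
      exact List.isChain_cons_cons.2 ⟨fun e => h e.symm, hs⟩

theorem foldl_stackStep_isChain {A : Type*} [DecidableEq A] (w : List A) {s : List A}
    (hs : s.IsChain (· ≠ ·)) : (w.foldl stackStep s).IsChain (· ≠ ·) := by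
  induction w generalizing s with
  | nil => exact hs
  | cons a w ih => exact ih (stackStep_isChain hs a)

/-- Reading `a` twice restores a reduced stack. Reducedness matters when `a` is on top: after
popping it, the next symbol must differ from `a` for `a` to be pushed back. -/
theorem stackStep_stackStep {A : Type*} [DecidableEq A] {s : List A}
    (hs : s.IsChain (· ≠ ·)) (a : A) : stackStep (stackStep s a) a = s := by
  rcases s with _ | ⟨b, _ | ⟨d, t⟩⟩
  · simp [stackStep]
  · by_cases h : b = a <;> simp [stackStep, h]
  · have hbd : b ≠ d := (List.isChain_cons_cons.1 hs).1
    by_cases h : b = a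
    · subst h
      simp [stackStep, hbd.symm]
    · simp [stackStep, h]

theorem foldl_stackStep_of_step {A : Type*} [DecidableEq A] {w w' : List A}
    (h : Step w w') : w.foldl stackStep [] = w'.foldl stackStep [] := by
  obtain ⟨u, v, a, rfl, rfl⟩ := h
  simp only [List.foldl_append, List.foldl_cons, List.foldl_nil]
  rw [stackStep_stackStep (foldl_stackStep_isChain u List.isChain_nil)]

theorem foldl_stackStep_eq_nil {A : Type*} [DecidableEq A] {w : List A}
    (h : Relation.ReflTransGen Step w []) : w.foldl stackStep [] = [] := by
  induction h using Relation.ReflTransGen.head_induction_on with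
  | refl => rfl
  | head h _ ih => rw [foldl_stackStep_of_step h, ih]

/-- A position of `u` which is a block of length 1 in `u ++ v` is one in `u`. -/
theorem single_of_append {A : Type*} {u v : List A} {i : ℕ} (hi : i < u.length)
    (h : (i = 0 ∨ (u ++ v)[i - 1]? ≠ (u ++ v)[i]?) ∧
      (i + 1 = (u ++ v).length ∨ (u ++ v)[i]? ≠ (u ++ v)[i + 1]?)) :
    (i = 0 ∨ u[i - 1]? ≠ u[i]?) ∧ (i + 1 = u.length ∨ u[i]? ≠ u[i + 1]?) := by
  have h1 : i - 1 < u.length := by omega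
  rw [List.getElem?_append_left hi, List.getElem?_append_left h1] at h
  refine ⟨h.1, ?_⟩
  rcases Nat.lt_or_ge (i + 1) u.length with h2 | h2
  · rw [List.getElem?_append_left h2] at h
    refine h.2.imp (fun e => ?_) id
    rw [List.length_append] at e
    omega
  · left
    omega

theorem singletonBlocks_concat_le {A : Type*} [DecidableEq A] (u : List A) (a : A) :
    singletonBlocks (u ++ [a]) ≤ singletonBlocks u + 1 := by
  unfold singletonBlocks
  refine le_trans (Finset.card_le_card (t := insert u.length _) ?_)
    (Finset.card_insert_le u.length _)
  intro i hi
  simp only [Finset.mem_filter, Finset.mem_range] at hi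
  have hlen : i < u.length + 1 := by simpa using hi.1
  simp only [Finset.mem_insert, Finset.mem_filter, Finset.mem_range]
  rcases Nat.lt_or_ge i u.length with h | h
  · exact Or.inr ⟨h, single_of_append h hi.2⟩
  · left
    omega

theorem singletonBlocks_pair_le {A : Type*} [DecidableEq A] (u : List A) (a : A) :
    singletonBlocks (u ++ [a, a]) ≤ singletonBlocks u := by
  unfold singletonBlocks
  refine Finset.card_le_card ?_
  intro i hi
  simp only [Finset.mem_filter, Finset.mem_range] at hi ⊢
  have hlen : i < u.length + 2 := by simpa using hi.1
  rcases Nat.lt_or_ge i u.length with h | h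
  · exact ⟨h, single_of_append h hi.2⟩
  · exfalso
    obtain ⟨-, h1, h2⟩ := hi
    have hi' : i = u.length ∨ i = u.length + 1 := by omega
    rcases hi' with rfl | rfl
    · rcases h2 with h2 | h2
      · simp at h2
      · simp at h2
    · rcases h1 with h1 | h1
      · simp at h1
      · simp at h1

/-- The bookkeeping invariant relating the prefix `p` read so far to the configuration.
State `true` is reached after an odd number of consecutive pops. In state `false`, either nothing
has been read, or the last move was a pop, or the last move was a push; in the last case the bound
concerns the prefix without the pushed symbol, since a pop coming next makes both positions
non-singleton. -/
def CountInv {A : Type*} [DecidableEq A] (p : List A) : Bool × List A × ℕ → Prop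
  | (true, s, c) => singletonBlocks p + 4 * c + 4 ≤ s.length + 4 * p.length
  | (false, s, c) =>
      (p = [] ∧ s = [] ∧ c = 0) ∨
      (singletonBlocks p + 4 * c + 2 ≤ s.length + 4 * p.length) ∨
      ∃ u a t, p = u ++ [a] ∧ s = a :: t ∧
        singletonBlocks u + 4 * c ≤ t.length + 4 * p.length

theorem singletonBlocks_nil {A : Type*} [DecidableEq A] :
    singletonBlocks ([] : List A) = 0 := rfl

/-- In state `false`, a bound valid for all three alternatives of the invariant. -/
theorem CountInv.bound {A : Type*} [DecidableEq A] {p s : List A} {c : ℕ}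
    (h : CountInv p (false, s, c)) :
    singletonBlocks p + 4 * c ≤ s.length + 4 * p.length := by
  rcases h with ⟨rfl, rfl, rfl⟩ | h | ⟨u, a, t, rfl, rfl, h⟩
  · simp [singletonBlocks_nil]
  · omega
  · have := singletonBlocks_concat_le u a
    simp only [List.length_cons] at *
    omega

theorem countInv_countStep {A : Type*} [DecidableEq A] {p : List A}
    {x : Bool × List A × ℕ} (h : CountInv p x) (a : A) :
    CountInv (p ++ [a]) (countStep x a) := by
  obtain ⟨b, s, c⟩ := x
  have hp := singletonBlocks_concat_le p a
  cases b with
  | false =>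
    simp only [countStep]
    split_ifs with hs
    · obtain ⟨t, rfl⟩ : ∃ t, s = a :: t := by
        cases s with
        | nil => simp at hs
        | cons d t => exact ⟨t, by simpa using hs⟩
      rcases h with ⟨-, h, -⟩ | h | ⟨u, d, t', rfl, hst, h⟩
      · simp at h
      · simp only [CountInv, List.tail_cons, List.length_append, List.length_cons,
          List.length_nil] at *
        omega
      · obtain ⟨rfl, rfl⟩ := List.cons.inj hst
        have h2 := singletonBlocks_pair_le u a
        simp only [CountInv, List.tail_cons, List.length_append, List.length_cons,
          List.length_nil, List.append_assoc, List.cons_append, List.nil_append] at *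
        omega
    · have hb := h.bound
      refine Or.inr (Or.inr ⟨p, a, s, rfl, rfl, ?_⟩)
      simp only [List.length_append, List.length_cons, List.length_nil]
      omega
  | true =>
    simp only [CountInv] at h
    simp only [countStep]
    split_ifs with hs
    · refine Or.inr (Or.inl ?_)
      simp only [List.length_tail, List.length_append, List.length_cons, List.length_nil]
      omega
    · refine Or.inr (Or.inr ⟨p, a, s, rfl, rfl, ?_⟩)
      simp only [List.length_append, List.length_cons, List.length_nil]
      omega

theorem countInv_foldl {A : Type*} [DecidableEq A] (w : List A) :
    CountInv w (w.foldl countStep (false, [], 0)) := by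
  induction w using List.reverseRecOn with
  | nil => exact Or.inl ⟨rfl, rfl, rfl⟩
  | append_singleton w a ih =>
    rw [List.foldl_append]
    exact countInv_countStep ih a

/-- If the irreducible normal form of `w` is the empty word, then `𝒯_k` writes
at most `|w| - h/6` output symbols while reading `w`, where `h` is the number of
blocks of length 1 in `w`. -/
theorem outputCount_le (k : ℕ) (hk : 2 ≤ k) (w : List (Fin k))
    (hw : Relation.ReflTransGen Step w []) :
    (outputCount w : ℚ) ≤ (w.length : ℚ) - (singletonBlocks w : ℚ) / 6 := by
  have hinv := countInv_foldl w
  have hstack : (w.foldl countStep (false, [], 0)).2.1 = [] := by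
    rw [foldl_countStep_stack]
    exact foldl_stackStep_eq_nil hw
  have key : singletonBlocks w + 4 * outputCount w ≤ 4 * w.length := by
    unfold outputCount
    generalize w.foldl countStep (false, [], 0) = x at hinv hstack
    obtain ⟨b, s, c⟩ := x
    obtain rfl : s = [] := hstack
    cases b with
    | false =>
      have := hinv.bound
      simpa using this
    | true =>
      simp only [CountInv, List.length_nil] at hinv
      show singletonBlocks w + 4 * c ≤ 4 * w.length
      omega
  have keyQ : (singletonBlocks w : ℚ) + 4 * (outputCount w : ℚ) ≤ 4 * (w.length : ℚ) := by
    exact_mod_cast key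
  have hpos : (0 : ℚ) ≤ (singletonBlocks w : ℚ) := Nat.cast_nonneg _
  linarith
end
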